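/- The collection {F + φ(z) : z ∈ ℤ[1/2]} is a tiling of K: it covers K, and for any two distinct z, z' ∈ ℤ[1/2] the overlap has measure zero, μ((F + φ(z)) ∩ (F + φ(z'))) = 0; moreover the boundary of F satisfies μ(∂F) = 0, so μ-almost every point of K lies in exactly one tile. -/

import Mathlib

/-- The diagonal embedding `φ : ℚ → K = ℝ × ℚ₂`, `φ(z) = (z, z)`. -/
noncomputable def phi (z : ℚ) : ℝ × ℚ_[2] := ((z : ℝ), (z : ℚ_[2]))

/-- The tile `F ⊂ K = ℝ × ℚ₂`: all points of the form
`(1/2)·∑_{i=1}^{∞} d_{-i}·φ(1)·(-3/2)^{-i}` with digits `d_{-i} ∈ {0,1,2}`, the series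
converging in `K` since multiplication by `(-3/2)⁻¹` contracts both coordinates. -/
noncomputable def Ftile : Set (ℝ × ℚ_[2]) :=
  {x : ℝ × ℚ_[2] | ∃ d : ℕ → ℕ, (∀ i, d i ≤ 2) ∧
    HasSum (fun i : ℕ => phi ((1 / 2 : ℚ) * (d i : ℚ) * (-3 / 2 : ℚ) ^ (-(i : ℤ) - 1))) x}


open MeasureTheory

/-- A dyadic rational: an element of `ℤ[1/2] = {a/2^ℓ : a ∈ ℤ, ℓ ∈ ℕ}`. -/
def IsDyadic (z : ℚ) : Prop := ∃ (a : ℤ) (ℓ : ℕ), z = (a : ℚ) / 2 ^ ℓ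

/-!
The base `A = -3/2` scales Haar measure on `K = ℝ × ℚ₂` by `|-3/2| · |-3/2|₂ = 3/2 · 2 = 3`, which
is also the number of digits. Hence in the set equation `A F = D + F` the three translates
`d + F` have total measure exactly `μ (A F)` and can only overlap in null sets. Every dyadic
rational has a finite expansion in base `A`, so peeling off one digit at a time carries essential
disjointness from digit translates to all dyadic translates of `F`.

For the covering, let `Λ` be the set of diagonally embedded dyadic rationals, a lattice in `K`.
As `Λ ⊆ A Λ + D`, the set `Λ + F` is stable under the contraction `A⁻¹`. It is also closed and at
bounded distance from every point of `K`, so it is all of `K`. Finally, by local finiteness the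
boundary of a tile is contained in the countably many null overlaps with the other tiles.
-/

section Development

open Set Filter Topology Function
open scoped Pointwise ENNReal NNReal

section Topology

lemma frontier_subset_iUnion_inter {α ι : Type*} [TopologicalSpace α] {t : ι → Set α}
    (hclosed : ∀ i, IsClosed (t i)) (hlf : LocallyFinite t) (hcover : ⋃ i, t i = univ) (i : ι) :
    frontier (t i) ⊆ ⋃ j : {j // j ≠ i}, t i ∩ t j := by
  have hrest : IsClosed (⋃ j : {j // j ≠ i}, t j) :=
    (hlf.comp_injective Subtype.val_injective).isClosed_iUnion fun j => hclosed j
  have hcompl : (t i)ᶜ ⊆ ⋃ j : {j // j ≠ i}, t j := by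
    intro x hx
    obtain ⟨j, hj⟩ := mem_iUnion.1 (hcover ▸ mem_univ x)
    exact mem_iUnion.2 ⟨⟨j, fun h => hx (h ▸ hj)⟩, hj⟩
  rw [frontier_eq_closure_inter_closure, (hclosed i).closure_eq, ← inter_iUnion]
  exact inter_subset_inter_right _ (closure_minimal hcompl hrest)

lemma eq_univ_of_contractingWith_of_mapsTo {X : Type*} [MetricSpace X] {f : X → X} {ρ : ℝ≥0}
    (hf : ContractingWith ρ f) (hsurj : Surjective f) {U : Set X} (hU : IsClosed U)
    (hmaps : MapsTo f U U) {R : ℝ} (hR : ∀ x, ∃ y ∈ U, dist x y ≤ R) : U = univ := by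
  have happrox : ∀ (n : ℕ) x, ∃ y ∈ U, dist x y ≤ ρ ^ n * R := by
    intro n
    induction n with
    | zero => simpa using hR
    | succ n ih =>
      intro x
      obtain ⟨x, rfl⟩ := hsurj x
      obtain ⟨y, hy, hxy⟩ := ih x
      refine ⟨f y, hmaps hy, (hf.toLipschitzWith.dist_le_mul x y).trans ?_⟩
      rw [pow_succ', mul_assoc]
      gcongr
  have hlim : Tendsto (fun n : ℕ => (ρ : ℝ) ^ n * R) atTop (𝓝 0) := by
    simpa using (tendsto_pow_atTop_nhds_zero_of_lt_one ρ.2 hf.1).mul_const R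
  refine eq_univ_of_forall fun x => hU.closure_eq ▸ Metric.mem_closure_iff.2 fun ε hε => ?_
  obtain ⟨n, hn⟩ := (hlim.eventually_lt_const hε).exists
  obtain ⟨y, hy, hxy⟩ := happrox n x
  exact ⟨y, hy, hxy.trans_lt hn⟩

lemma locallyFinite_vadd {ι E : Type*} [SeminormedAddCommGroup E] {f : ι → E}
    (hf : ∀ R : ℝ, {i | ‖f i‖ ≤ R}.Finite) {F : Set E} (hF : Bornology.IsBounded F) :
    LocallyFinite fun i => f i +ᵥ F := by
  intro x
  obtain ⟨C, hC⟩ := hF.exists_norm_le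
  refine ⟨Metric.ball x 1, Metric.ball_mem_nhds x one_pos, (hf (‖x‖ + 1 + C)).subset ?_⟩
  rintro i ⟨-, ⟨y, hy, rfl⟩, hyx⟩
  change f i + y ∈ Metric.ball x 1 at hyx
  rw [mem_ball_iff_norm] at hyx
  calc ‖f i‖ = ‖x + (f i + y - x) - y‖ := by congr 1; abel
    _ ≤ ‖x‖ + ‖f i + y - x‖ + ‖y‖ := (norm_sub_le _ _).trans (by gcongr; exact norm_add_le _ _)
    _ ≤ ‖x‖ + 1 + C := by gcongr; exact hC y hy

end Topology

section AEDisjoint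

variable {α ι : Type*} [MeasurableSpace α] {μ : Measure α}

lemma pairwise_aedisjoint_of_sum_measure_le {s : Finset ι} {t : ι → Set α}
    (ht : ∀ i ∈ s, NullMeasurableSet (t i) μ) (hfin : ∀ i ∈ s, μ (t i) ≠ ∞)
    (hsum : ∑ i ∈ s, μ (t i) ≤ μ (⋃ i ∈ s, t i)) :
    (s : Set ι).Pairwise (AEDisjoint μ on t) := by
  classical
  intro i hi j hj hij
  have hj' : j ∈ s.erase i := Finset.mem_erase.2 ⟨hij.symm, hj⟩
  have hrest : ∑ k ∈ s.erase i, μ (t k) ≠ ∞ :=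
    ENNReal.sum_ne_top.2 fun k hk => hfin k (Finset.mem_of_mem_erase hk)
  have hcover : ⋃ k ∈ s, t k ⊆ (⋃ k ∈ s.erase i, t k) ∪ (t i \ t j) := by
    intro x hx
    obtain ⟨k, hk, hxk⟩ := mem_iUnion₂.1 hx
    by_cases hki : k = i
    · subst hki
      by_cases hxj : x ∈ t j
      · exact Or.inl (mem_biUnion hj' hxj)
      · exact Or.inr ⟨hxk, hxj⟩
    · exact Or.inl (mem_biUnion (Finset.mem_erase.2 ⟨hki, hk⟩) hxk)
  have hle : ∑ k ∈ s.erase i, μ (t k) + μ (t i) ≤ ∑ k ∈ s.erase i, μ (t k) + μ (t i \ t j) :=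
    calc ∑ k ∈ s.erase i, μ (t k) + μ (t i) = ∑ k ∈ s, μ (t k) := Finset.sum_erase_add s _ hi
      _ ≤ μ ((⋃ k ∈ s.erase i, t k) ∪ (t i \ t j)) := hsum.trans (measure_mono hcover)
      _ ≤ μ (⋃ k ∈ s.erase i, t k) + μ (t i \ t j) := measure_union_le _ _
      _ ≤ ∑ k ∈ s.erase i, μ (t k) + μ (t i \ t j) := by
        gcongr
        exact measure_biUnion_finset_le _ _
  have hdiff : μ (t i) ≤ μ (t i \ t j) := (ENNReal.add_le_add_iff_left hrest).1 hle
  have hsplit : μ (t i ∩ t j) + μ (t i \ t j) ≤ 0 + μ (t i \ t j) := by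
    rw [measure_inter_add_sdiff₀ (t i) (ht j hj), zero_add]
    exact hdiff
  exact nonpos_iff_eq_zero.1 <|
    ENNReal.le_of_add_le_add_right (measure_ne_top_of_subset sdiff_subset (hfin i hi)) hsplit

lemma ae_existsUnique_mem_of_pairwise_aedisjoint [Countable ι] {t : ι → Set α}
    (hdisj : Pairwise (AEDisjoint μ on t)) (hcover : ⋃ i, t i = univ) :
    ∀ᵐ x ∂μ, ∃! i, x ∈ t i := by
  have hsep : ∀ᵐ x ∂μ, ∀ i j, i ≠ j → x ∉ t i ∩ t j := by
    simp only [ae_all_iff]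
    exact fun i j hij => measure_eq_zero_iff_ae_notMem.1 (hdisj hij)
  filter_upwards [hsep] with x hx
  obtain ⟨i, hi⟩ := mem_iUnion.1 (hcover ▸ mem_univ x)
  exact ⟨i, hi, fun j hj => by_contra fun hji => hx j i hji ⟨hj, hi⟩⟩

lemma measure_frontier_eq_zero_of_pairwise_aedisjoint [TopologicalSpace α] [Countable ι]
    {t : ι → Set α} (hclosed : ∀ i, IsClosed (t i)) (hlf : LocallyFinite t)
    (hcover : ⋃ i, t i = univ) (hdisj : Pairwise (AEDisjoint μ on t)) (i : ι) :
    μ (frontier (t i)) = 0 :=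
  measure_mono_null (frontier_subset_iUnion_inter hclosed hlf hcover i) <|
    measure_iUnion_null fun j => hdisj j.2.symm

end AEDisjoint

section HaarChar

variable {G H A B : Type*} [Group G] [Group H] [AddCommGroup A] [DistribMulAction G A]
  [DistribMulAction H A] [TopologicalSpace A] [IsTopologicalAddGroup A] [LocallyCompactSpace A]
  [ContinuousConstSMul G A] [ContinuousConstSMul H A]
  [AddCommGroup B] [DistribMulAction G B] [TopologicalSpace B] [IsTopologicalAddGroup B]
  [LocallyCompactSpace B] [ContinuousConstSMul G B]

lemma distribHaarChar_eq_of_smul_eq {g : G} {h : H} (hgh : ∀ a : A, g • a = h • a) :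
    distribHaarChar A g = distribHaarChar A h := by
  borelize A
  obtain ⟨s⟩ : Nonempty (TopologicalSpace.PositiveCompacts A) := inferInstance
  refine distribHaarChar_eq_of_measure_smul_eq_mul (μ := Measure.addHaar) (s := s)
    (Measure.measure_pos_of_nonempty_interior _ s.interior_nonempty).ne'
    s.isCompact.measure_ne_top ?_
  rw [distribHaarChar_mul, show g • (s : Set A) = h • (s : Set A) from image_congr fun a _ => hgh a]

lemma distribHaarChar_prod [SecondCountableTopology A] [SecondCountableTopology B] (g : G) :
    distribHaarChar (A × B) g = distribHaarChar A g * distribHaarChar B g := by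
  borelize A B
  obtain ⟨s⟩ : Nonempty (TopologicalSpace.PositiveCompacts A) := inferInstance
  obtain ⟨t⟩ : Nonempty (TopologicalSpace.PositiveCompacts B) := inferInstance
  have hs := Measure.measure_pos_of_nonempty_interior Measure.addHaar s.interior_nonempty
  have ht := Measure.measure_pos_of_nonempty_interior Measure.addHaar t.interior_nonempty
  refine distribHaarChar_eq_of_measure_smul_eq_mul
    (μ := (Measure.addHaar : Measure A).prod (Measure.addHaar : Measure B)) (s := s ×ˢ t) ?_ ?_ ?_
  · rw [Measure.prod_prod]
    exact mul_ne_zero hs.ne' ht.ne'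
  · rw [Measure.prod_prod]
    exact ENNReal.mul_ne_top s.isCompact.measure_ne_top t.isCompact.measure_ne_top
  · rw [smul_set_prod, Measure.prod_prod, Measure.prod_prod, ← distribHaarChar_mul,
      ← distribHaarChar_mul, ENNReal.coe_mul, mul_mul_mul_comm]

lemma distribHaarChar_real (u : ℝˣ) : distribHaarChar ℝ u = ‖(u : ℝ)‖₊ := by
  refine distribHaarChar_eq_of_measure_smul_eq_mul (μ := volume) (s := Icc 0 1)
    (by simp) (by simp) ?_
  rw [show u • Icc (0 : ℝ) 1 = (u : ℝ) • Icc (0 : ℝ) 1 from rfl, Measure.addHaar_smul,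
    Module.finrank_self, pow_one, ← Real.norm_eq_abs, ofReal_norm, enorm_eq_nnnorm]

variable {p : ℕ} [Fact p.Prime]

lemma padic_closedBall_zero_one_eq_iUnion_ball :
    Metric.closedBall (0 : ℚ_[p]) 1 = ⋃ k ∈ Finset.range p, Metric.ball (k : ℚ_[p]) 1 := by
  ext x
  simp only [mem_closedBall_zero_iff, mem_iUnion₂, mem_ball_iff_norm, Finset.mem_range, exists_prop]
  constructor
  · intro hx
    exact ⟨_, PadicInt.zmodRepr_lt_p ⟨x, hx⟩, PadicInt.norm_sub_zmodRepr_lt_one ⟨x, hx⟩⟩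
  · rintro ⟨k, -, hk⟩
    simpa using (IsUltrametricDist.norm_add_le_max (x - k) k).trans
      (max_le hk.le (by exact_mod_cast Padic.norm_int_le_one (p := p) k))

lemma pairwiseDisjoint_padic_ball_natCast :
    ((Finset.range p : Finset ℕ) : Set ℕ).PairwiseDisjoint fun k => Metric.ball (k : ℚ_[p]) 1 := by
  intro k hk l hl hkl
  refine (IsUltrametricDist.ball_eq_or_disjoint (k : ℚ_[p]) l 1).resolve_left fun h => hkl ?_
  have hmem : (k : ℚ_[p]) ∈ Metric.ball (l : ℚ_[p]) 1 := h ▸ Metric.mem_ball_self one_pos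
  have hdvd : (p : ℤ) ∣ k - l := by
    rw [← Padic.norm_intCast_lt_one_iff]
    simpa only [mem_ball_iff_norm, Int.cast_sub, Int.cast_natCast] using hmem
  have hmod : l ≡ k [MOD p] := Nat.modEq_iff_dvd.2 hdvd
  exact (hmod.eq_of_lt_of_lt (Finset.mem_range.1 hl) (Finset.mem_range.1 hk)).symm

lemma measure_padic_closedBall_zero_one [MeasurableSpace ℚ_[p]] [BorelSpace ℚ_[p]]
    (μ : Measure ℚ_[p]) [μ.IsAddLeftInvariant] :
    μ (Metric.closedBall 0 1) = p * μ (Metric.ball 0 1) := by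
  have htranslate (k : ℕ) : μ (Metric.ball (k : ℚ_[p]) 1) = μ (Metric.ball 0 1) := by
    rw [← measure_vadd μ (k : ℚ_[p]) (Metric.ball 0 1), Metric.vadd_ball, vadd_eq_add, add_zero]
  rw [padic_closedBall_zero_one_eq_iUnion_ball,
    measure_biUnion_finset pairwiseDisjoint_padic_ball_natCast
      fun _ _ => Metric.isOpen_ball.measurableSet]
  simp only [htranslate, Finset.sum_const, Finset.card_range, nsmul_eq_mul]

lemma smul_padic_closedBall (u : ℚ_[p]ˣ) :
    u • Metric.closedBall (0 : ℚ_[p]) 1 = Metric.closedBall 0 ‖(u : ℚ_[p])‖ := by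
  rw [show u • Metric.closedBall (0 : ℚ_[p]) 1 = (u : ℚ_[p]) • Metric.closedBall 0 1 from rfl,
    smul_closedBall' u.ne_zero, smul_zero, mul_one]

lemma padic_closedBall_norm_prime :
    Metric.closedBall (0 : ℚ_[p]) ‖(p : ℚ_[p])‖ = Metric.ball 0 1 := by
  ext x
  rw [mem_closedBall_zero_iff, mem_ball_zero_iff, Padic.norm_p, ← zpow_neg_one]
  simpa using (Padic.norm_le_pow_iff_norm_lt_pow_add_one x (-1))

lemma distribHaarChar_padic_eq_of_norm_eq {u v : ℚ_[p]ˣ} (h : ‖(u : ℚ_[p])‖ = ‖(v : ℚ_[p])‖) :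
    distribHaarChar ℚ_[p] u = distribHaarChar ℚ_[p] v := by
  borelize ℚ_[p]
  refine distribHaarChar_eq_of_measure_smul_eq_mul (μ := Measure.addHaar)
    (s := Metric.closedBall 0 1) (Metric.measure_closedBall_pos _ _ one_pos).ne'
    (isCompact_closedBall _ _).measure_ne_top ?_
  rw [distribHaarChar_mul, smul_padic_closedBall, smul_padic_closedBall, h]

lemma distribHaarChar_padic_prime {u : ℚ_[p]ˣ} (hu : (u : ℚ_[p]) = p) :
    distribHaarChar ℚ_[p] u = (p : ℝ≥0)⁻¹ := by
  borelize ℚ_[p]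
  have hp : (p : ℝ≥0) ≠ 0 := Nat.cast_ne_zero.2 (Fact.out : p.Prime).ne_zero
  refine distribHaarChar_eq_of_measure_smul_eq_mul (μ := Measure.addHaar)
    (s := Metric.closedBall 0 1) (Metric.measure_closedBall_pos _ _ one_pos).ne'
    (isCompact_closedBall _ _).measure_ne_top ?_
  rw [smul_padic_closedBall, hu, padic_closedBall_norm_prime, measure_padic_closedBall_zero_one,
    ← mul_assoc, ← ENNReal.coe_natCast, ← ENNReal.coe_mul, inv_mul_cancel₀ hp, ENNReal.coe_one,
    one_mul]

lemma distribHaarChar_padic (u : ℚ_[p]ˣ) : distribHaarChar ℚ_[p] u = ‖(u : ℚ_[p])‖₊ := by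
  have hp : (p : ℚ_[p]) ≠ 0 := Nat.cast_ne_zero.2 (Fact.out : p.Prime).ne_zero
  set ϖ : ℚ_[p]ˣ := Units.mk0 p hp
  have hu : ‖(u : ℚ_[p])‖ = (p : ℝ)⁻¹ ^ (u : ℚ_[p]).valuation := by
    rw [Padic.norm_eq_zpow_neg_valuation u.ne_zero, inv_zpow']
  have hnorm : ‖(u : ℚ_[p])‖ = ‖((ϖ ^ (u : ℚ_[p]).valuation : ℚ_[p]ˣ) : ℚ_[p])‖ := by
    rw [Units.val_zpow_eq_zpow_val, Units.val_mk0, norm_zpow, Padic.norm_p, hu]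
  rw [distribHaarChar_padic_eq_of_norm_eq hnorm, map_zpow,
    distribHaarChar_padic_prime (Units.val_mk0 hp)]
  ext
  rw [NNReal.coe_zpow, NNReal.coe_inv, NNReal.coe_natCast, coe_nnnorm, hu]

end HaarChar

section DigitTile

variable {G E : Type*} [Group G]

/-- The digit tile of the base `g` and the digit set `D`: all sums `∑_{i ≥ 1} g⁻ⁱ • d_{-i}` with
digits in `D`. The digit `d_{-i}` is stored at index `i - 1`. -/
def digitTile [AddCommGroup E] [TopologicalSpace E] [DistribMulAction G E] (g : G) (D : Set E) :
    Set E :=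
  {x | ∃ d : ℕ → E, (∀ i, d i ∈ D) ∧ HasSum (fun i : ℕ => g⁻¹ ^ (i + 1) • d i) x}

/-- `HasFiniteExpansion g D x` says that `x = ∑_{i < n} gⁱ • d_i` for some `n` and some digits
`d_i ∈ D`; the constructors are Horner's scheme. -/
inductive HasFiniteExpansion [AddCommGroup E] [DistribMulAction G E] (g : G) (D : Set E) : E → Prop
  | zero : HasFiniteExpansion g D 0
  | step {w d : E} (hw : HasFiniteExpansion g D w) (hd : d ∈ D) : HasFiniteExpansion g D (g • w + d)

section Topological

variable [AddCommGroup E] [TopologicalSpace E] [DistribMulAction G E] {g : G} {D : Set E} {x : E}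

lemma zero_mem_digitTile (hD : 0 ∈ D) : 0 ∈ digitTile g D :=
  ⟨0, fun _ => hD, by simpa only [Pi.zero_apply, smul_zero] using hasSum_zero⟩

variable [ContinuousConstSMul G E]

lemma mem_smul_digitTile :
    x ∈ g • digitTile g D ↔
      ∃ d : ℕ → E, (∀ i, d i ∈ D) ∧ HasSum (fun i : ℕ => g⁻¹ ^ i • d i) x := by
  rw [mem_smul_set_iff_inv_smul_mem]
  refine exists_congr fun d => and_congr_right fun _ => ⟨fun h => ?_, fun h => ?_⟩
  · simpa only [pow_succ', mul_smul, smul_inv_smul] using h.const_smul g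
  · simpa only [pow_succ', mul_smul] using h.const_smul g⁻¹

lemma smul_digitTile [IsTopologicalAddGroup E] : g • digitTile g D = D + digitTile g D := by
  ext x
  rw [mem_smul_digitTile]
  constructor
  · rintro ⟨d, hd, hx⟩
    refine ⟨d 0, hd 0, x - d 0, ⟨fun i => d (i + 1), fun i => hd (i + 1), ?_⟩, add_sub_cancel _ _⟩
    simpa only [Finset.sum_range_one, pow_zero, one_smul] using (hasSum_nat_add_iff' 1).2 hx
  · rintro ⟨d₀, hd₀, y, ⟨d, hd, hy⟩, rfl⟩
    refine ⟨fun i => Nat.casesOn i d₀ d, fun i => ?_, (hasSum_nat_add_iff' 1).1 ?_⟩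
    · cases i
      exacts [hd₀, hd _]
    · simpa using hy

end Topological

section Compact

variable [NormedAddCommGroup E] [DistribMulAction G E] {g : G} {ρ : ℝ≥0}

lemma norm_pow_smul_le (hg : LipschitzWith ρ fun x : E => g • x) (n : ℕ) (x : E) :
    ‖g ^ n • x‖ ≤ ρ ^ n * ‖x‖ := by
  simpa only [smul_iterate, dist_zero_right, smul_zero, NNReal.coe_pow] using
    (hg.iterate n).dist_le_mul x 0

variable [CompleteSpace E] {D : Set E}

lemma isCompact_digitTile (hg : ContractingWith ρ fun x : E => g⁻¹ • x) (hD : IsCompact D) :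
    IsCompact (digitTile g D) := by
  obtain ⟨C, hC⟩ := hD.isBounded.exists_norm_le
  have hsummable : Summable fun i : ℕ => (ρ : ℝ) ^ (i + 1) * C :=
    ((summable_nat_add_iff 1).2 (summable_geometric_of_lt_one ρ.2 hg.1)).mul_right C
  have hbound (i : ℕ) (d : ℕ → E) (hd : d ∈ univ.pi fun _ : ℕ => D) :
      ‖g⁻¹ ^ (i + 1) • d i‖ ≤ ρ ^ (i + 1) * C :=
    (norm_pow_smul_le hg.toLipschitzWith _ _).trans (by gcongr; exact hC _ (hd i trivial))
  have hcont (i : ℕ) : Continuous fun d : ℕ → E => g⁻¹ ^ (i + 1) • d i := by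
    simpa only [smul_iterate, comp_def] using
      (hg.toLipschitzWith.continuous.iterate (i + 1)).comp (continuous_apply i)
  have himage : digitTile g D =
      (fun d : ℕ → E => ∑' i : ℕ, g⁻¹ ^ (i + 1) • d i) '' univ.pi fun _ : ℕ => D := by
    ext x
    constructor
    · rintro ⟨d, hd, hx⟩
      exact ⟨d, fun i _ => hd i, hx.tsum_eq⟩
    · rintro ⟨d, hd, rfl⟩
      exact ⟨d, fun i => hd i trivial, (hsummable.of_norm_bounded fun i => hbound i d hd).hasSum⟩
  rw [himage]
  exact (isCompact_univ_pi fun _ => hD).image_of_continuousOn <|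
    continuousOn_tsum (fun i => (hcont i).continuousOn) hsummable hbound

end Compact

section Overlap

variable [AddCommGroup E] [DistribMulAction G E] {g : G} {D : Finset E} {F : Set E}

lemma smul_add_vadd_subset (hF : g • F = (D : Set E) + F) {w d : E} (hd : d ∈ D) :
    (g • w + d) +ᵥ F ⊆ g • (w +ᵥ F) := by
  rintro _ ⟨y, hy, rfl⟩
  obtain ⟨z, hz, hzy⟩ : d + y ∈ g • F := hF ▸ add_mem_add hd hy
  refine ⟨w + z, ⟨z, hz, rfl⟩, ?_⟩
  change g • z = d + y at hzy
  change g • (w + z) = g • w + d + y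
  rw [smul_add, hzy, add_assoc]

variable [TopologicalSpace E] [IsTopologicalAddGroup E] [LocallyCompactSpace E]
  [ContinuousConstSMul G E] [MeasurableSpace E] [BorelSpace E]
  {μ : Measure E} [μ.IsAddHaarMeasure] [μ.Regular]

lemma pairwise_aedisjoint_digit_vadd (hF : g • F = (D : Set E) + F) (hmeas : MeasurableSet F)
    (hfin : μ F ≠ ∞) (hcard : (D.card : ℝ≥0) ≤ distribHaarChar E g) :
    (D : Set E).Pairwise (AEDisjoint μ on (· +ᵥ F)) := by
  refine pairwise_aedisjoint_of_sum_measure_le (fun d _ => (hmeas.const_vadd d).nullMeasurableSet)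
    (fun d _ => by rwa [measure_vadd]) ?_
  calc ∑ d ∈ D, μ (d +ᵥ F) = (D.card : ℝ≥0) * μ F := by
        simp only [measure_vadd, Finset.sum_const, nsmul_eq_mul, ENNReal.coe_natCast]
    _ ≤ distribHaarChar E g * μ F := by gcongr
    _ = μ ((D : Set E) + F) := by rw [distribHaarChar_mul, hF]
    _ = μ (⋃ d ∈ D, d +ᵥ F) := congrArg μ (iUnion_vadd_set (D : Set E) F).symm

lemma aedisjoint_smul_add_vadd (hF : g • F = (D : Set E) + F)
    (hdigit : (D : Set E).Pairwise (AEDisjoint μ on (· +ᵥ F))) {w w' d d' : E}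
    (h : w ≠ w' → AEDisjoint μ (w +ᵥ F) (w' +ᵥ F)) (hd : d ∈ D) (hd' : d' ∈ D)
    (hne : g • w + d ≠ g • w' + d') :
    AEDisjoint μ ((g • w + d) +ᵥ F) ((g • w' + d') +ᵥ F) := by
  by_cases hw : w = w'
  · subst hw
    have hdd' : μ ((d +ᵥ F) ∩ (d' +ᵥ F)) = 0 := hdigit hd hd' fun h => hne (h ▸ rfl)
    change μ _ = 0
    rwa [← vadd_eq_add, ← vadd_eq_add, vadd_assoc, vadd_assoc, ← vadd_set_inter, measure_vadd]
  · have hscaled : μ (g • (w +ᵥ F) ∩ g • (w' +ᵥ F)) = 0 := by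
      rw [← smul_set_inter, ← distribHaarChar_mul, h hw, mul_zero]
    exact measure_mono_null
      (inter_subset_inter (smul_add_vadd_subset hF hd) (smul_add_vadd_subset hF hd')) hscaled

theorem HasFiniteExpansion.aedisjoint_vadd (hF : g • F = (D : Set E) + F)
    (hdigit : (D : Set E).Pairwise (AEDisjoint μ on (· +ᵥ F))) (hzero : 0 ∈ D) {z z' : E}
    (hz : HasFiniteExpansion g (D : Set E) z) (hz' : HasFiniteExpansion g (D : Set E) z')
    (hne : z ≠ z') : AEDisjoint μ (z +ᵥ F) (z' +ᵥ F) := by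
  have horner_zero : (0 : E) = g • 0 + 0 := by rw [smul_zero, add_zero]
  induction hz generalizing z' with
  | zero =>
    induction hz' with
    | zero => exact absurd rfl hne
    | step _ hd' ih' =>
      rw [horner_zero] at hne ⊢
      exact aedisjoint_smul_add_vadd hF hdigit ih' hzero hd' hne
  | step _ hd ih =>
    cases hz' with
    | zero =>
      rw [horner_zero] at hne ⊢
      exact aedisjoint_smul_add_vadd hF hdigit (ih .zero) hd hzero hne
    | step hw' hd' => exact aedisjoint_smul_add_vadd hF hdigit (ih hw') hd hd' hne

end Overlap

section Covering

variable [NormedAddCommGroup E] [DistribMulAction G E] {g : G} {Λ D F : Set E}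

lemma inv_smul_mapsTo_add (hF : g • F = D + F) (hΛ : Λ ⊆ g • Λ + D) :
    MapsTo (fun x : E => g⁻¹ • x) (Λ + F) (Λ + F) := by
  have hsub : Λ + F ⊆ g • (Λ + F) :=
    calc Λ + F ⊆ g • Λ + D + F := add_subset_add_right hΛ
      _ = g • (Λ + F) := by rw [add_assoc, ← hF, smul_add]
  exact fun x hx => mem_smul_set_iff_inv_smul_mem.1 (hsub hx)

theorem add_eq_univ_of_contractingWith {ρ : ℝ≥0} (hg : ContractingWith ρ fun x : E => g⁻¹ • x)
    (hF : g • F = D + F) (hne : F.Nonempty) (hΛ : Λ ⊆ g • Λ + D) (hclosed : IsClosed (Λ + F))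
    {R : ℝ} (hdense : ∀ x, ∃ l ∈ Λ, ‖x - l‖ ≤ R) : Λ + F = univ := by
  obtain ⟨y, hy⟩ := hne
  refine eq_univ_of_contractingWith_of_mapsTo hg (MulAction.surjective g⁻¹) hclosed
    (inv_smul_mapsTo_add hF hΛ) (R := R) fun x => ?_
  obtain ⟨l, hl, hxl⟩ := hdense (x - y)
  exact ⟨l + y, add_mem_add hl hy, by rwa [dist_eq_norm, add_comm, ← sub_sub]⟩

end Covering

end DigitTile

section RationalAction

variable {p : ℕ} [Fact p.Prime]

lemma distribHaarChar_real_prod_padic (u : ℚˣ) :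
    distribHaarChar (ℝ × ℚ_[p]) u = ‖(u : ℝ)‖₊ * ‖(u : ℚ_[p])‖₊ := by
  have hreal : distribHaarChar ℝ u = ‖(u : ℝ)‖₊ :=
    (distribHaarChar_eq_of_smul_eq (h := Units.map (Rat.castHom ℝ).toMonoidHom u)
      fun x => Rat.smul_def (u : ℚ) x).trans (distribHaarChar_real _)
  have hpadic : distribHaarChar ℚ_[p] u = ‖(u : ℚ_[p])‖₊ :=
    (distribHaarChar_eq_of_smul_eq (h := Units.map (Rat.castHom ℚ_[p]).toMonoidHom u)
      fun x => Rat.smul_def (u : ℚ) x).trans (distribHaarChar_padic _)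
  rw [distribHaarChar_prod, hreal, hpadic]

lemma lipschitzWith_rat_smul_real_prod_padic (q : ℚ) :
    LipschitzWith (max ‖(q : ℝ)‖₊ ‖(q : ℚ_[p])‖₊) fun x : ℝ × ℚ_[p] => q • x := by
  have hreal : LipschitzWith ‖(q : ℝ)‖₊ fun x : ℝ × ℚ_[p] => q • x.1 := by
    simpa only [Rat.smul_def, smul_eq_mul, mul_one, comp_def] using
      (lipschitzWith_smul (β := ℝ) (q : ℝ)).comp LipschitzWith.prod_fst
  have hpadic : LipschitzWith ‖(q : ℚ_[p])‖₊ fun x : ℝ × ℚ_[p] => q • x.2 := by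
    simpa only [Rat.smul_def, smul_eq_mul, mul_one, comp_def] using
      (lipschitzWith_smul (β := ℚ_[p]) (q : ℚ_[p])).comp LipschitzWith.prod_snd
  exact hreal.prodMk hpadic

lemma exists_norm_sub_int_div_pow_le_one (x : ℚ_[p]) :
    ∃ (k : ℤ) (n : ℕ), ‖x - k / (p : ℚ_[p]) ^ n‖ ≤ 1 := by
  have hp : (p : ℚ_[p]) ≠ 0 := Nat.cast_ne_zero.2 (Fact.out : p.Prime).ne_zero
  have hp_one : (1 : ℝ) < p := by exact_mod_cast (Fact.out : p.Prime).one_lt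
  obtain ⟨n, hn⟩ := pow_unbounded_of_one_lt ‖x‖ hp_one
  have hint : ‖(p : ℚ_[p]) ^ n * x‖ ≤ 1 := by
    rw [norm_mul, norm_pow, Padic.norm_p, inv_pow, inv_mul_le_one₀ (by positivity)]
    exact hn.le
  obtain ⟨k, hk⟩ := PadicInt.denseRange_natCast.exists_dist_lt (⟨_, hint⟩ : ℤ_[p])
    (show (0 : ℝ) < ‖(p : ℚ_[p]) ^ n‖ from norm_pos_iff.2 (pow_ne_zero n hp))
  have hk' : ‖(p : ℚ_[p]) ^ n * x - k‖ < ‖(p : ℚ_[p]) ^ n‖ := hk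
  refine ⟨k, n, ?_⟩
  rw [← mul_div_cancel_left₀ x (pow_ne_zero n hp), ← sub_div, norm_div,
    div_le_one (norm_pos_iff.2 (pow_ne_zero n hp)), Int.cast_natCast]
  exact hk'.le

end RationalAction

section Dyadic

lemma padic_norm_two : ‖(2 : ℚ_[2])‖ = 2⁻¹ := by
  exact_mod_cast Padic.norm_p (p := 2)

lemma padic_norm_three : ‖(3 : ℚ_[2])‖ = 1 := by
  exact_mod_cast (Padic.norm_natCast_eq_one_iff (p := 2) (n := 3)).2 (by norm_num)

variable {z w : ℚ}

lemma isDyadic_intCast (k : ℤ) : IsDyadic k :=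
  ⟨k, 0, by rw [pow_zero, div_one]⟩

lemma IsDyadic.add (hz : IsDyadic z) (hw : IsDyadic w) : IsDyadic (z + w) := by
  obtain ⟨a, l, rfl⟩ := hz
  obtain ⟨b, m, rfl⟩ := hw
  refine ⟨a * 2 ^ m + 2 ^ l * b, l + m, ?_⟩
  rw [div_add_div _ _ (by positivity) (by positivity), pow_add]
  push_cast
  rfl

lemma IsDyadic.exists_intCast_eq_of_norm_le_one (hz : IsDyadic z) (h : ‖(z : ℚ_[2])‖ ≤ 1) :
    ∃ k : ℤ, z = k := by
  obtain ⟨a, l, rfl⟩ := hz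
  have hdvd : ((2 : ℕ) : ℤ) ^ l ∣ a := by
    rw [← Padic.norm_int_le_pow_iff_dvd, zpow_neg, zpow_natCast, ← inv_pow, ← Padic.norm_p,
      ← norm_pow]
    push_cast at h ⊢
    rwa [norm_div, div_le_one (norm_pos_iff.2 (pow_ne_zero l two_ne_zero))] at h
  obtain ⟨k, rfl⟩ := hdvd
  refine ⟨k, ?_⟩
  push_cast
  exact mul_div_cancel_left₀ _ (by positivity)

lemma finite_isDyadic_norm_phi_le (R : ℝ) : {z : ℚ | IsDyadic z ∧ ‖phi z‖ ≤ R}.Finite := by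
  obtain ⟨m, hm⟩ := pow_unbounded_of_one_lt R one_lt_two
  refine ((finite_Icc (-⌈2 ^ m * R⌉) ⌈2 ^ m * R⌉).image fun k : ℤ => (k : ℚ) / 2 ^ m).subset ?_
  rintro z ⟨hz, hzR⟩
  have hreal : |(z : ℝ)| ≤ R := (norm_fst_le (phi z)).trans hzR
  have hpadic : ‖(z : ℚ_[2])‖ ≤ 2 ^ m := ((norm_snd_le (phi z)).trans hzR).trans hm.le
  have hscaled : IsDyadic (2 ^ m * z) := by
    obtain ⟨a, l, rfl⟩ := hz
    exact ⟨2 ^ m * a, l, by push_cast; ring⟩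
  have hnorm : ‖((2 ^ m * z : ℚ) : ℚ_[2])‖ ≤ 1 := by
    push_cast
    rwa [norm_mul, norm_pow, padic_norm_two, inv_pow, inv_mul_le_one₀ (by positivity)]
  obtain ⟨k, hk⟩ := hscaled.exists_intCast_eq_of_norm_le_one hnorm
  have habs : |(k : ℝ)| ≤ ⌈2 ^ m * R⌉ := by
    have hk' : (2 : ℝ) ^ m * z = k := by exact_mod_cast hk
    rw [← hk', abs_mul, abs_of_pos (by positivity)]
    exact (by gcongr : (2 : ℝ) ^ m * |(z : ℝ)| ≤ 2 ^ m * R).trans (Int.le_ceil _)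
  refine ⟨k, abs_le.1 (by exact_mod_cast habs), ?_⟩
  exact (eq_div_of_mul_eq (by positivity) (by rw [mul_comm, hk])).symm

lemma exists_isDyadic_norm_sub_phi_le_one (x : ℝ × ℚ_[2]) :
    ∃ z, IsDyadic z ∧ ‖x - phi z‖ ≤ 1 := by
  obtain ⟨q, hq, hpadic⟩ : ∃ q, IsDyadic q ∧ ‖x.2 - q‖ ≤ 1 := by
    obtain ⟨k, n, h⟩ := exists_norm_sub_int_div_pow_le_one x.2
    exact ⟨k / 2 ^ n, ⟨k, n, rfl⟩, by exact_mod_cast h⟩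
  refine ⟨q + ⌊x.1 - q⌋, hq.add (isDyadic_intCast _), max_le ?_ ?_⟩
  · change |x.1 - ((q + ⌊x.1 - q⌋ : ℚ) : ℝ)| ≤ 1
    rw [Rat.cast_add, Rat.cast_intCast, ← sub_sub, Int.self_sub_floor, Int.abs_fract]
    exact (Int.fract_lt_one _).le
  · change ‖x.2 - ((q + ⌊x.1 - q⌋ : ℚ) : ℚ_[2])‖ ≤ 1
    rw [Rat.cast_add, Rat.cast_intCast, ← sub_sub, sub_eq_add_neg, ← Int.cast_neg]
    exact (IsUltrametricDist.norm_add_le_max _ _).trans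
      (max_le hpadic (Padic.norm_int_le_one _))

lemma exists_digit_int_div_two_pow (a : ℤ) (l : ℕ) :
    ∃ d : ℕ, d < 3 ∧ ∃ b : ℤ, (a : ℚ) / 2 ^ l = d - 3 * (b / 2 ^ l) := by
  obtain ⟨d, hd, b, hb⟩ : ∃ d : ℕ, d < 3 ∧ ∃ b : ℤ, a = d * 2 ^ l - 3 * b := by
    induction l generalizing a with
    | zero => exact ⟨(a % 3).toNat, by omega, -(a / 3), by omega⟩
    | succ l ih =>
      obtain ⟨d, hd, b, hb⟩ := ih (2 * a)
      exact ⟨d, hd, 2 * b + a, by linear_combination 2 * hb⟩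
  refine ⟨d, hd, b, ?_⟩
  rw [hb]
  push_cast
  field_simp

lemma IsDyadic.exists_digit (hz : IsDyadic z) :
    ∃ d : ℕ, d < 3 ∧ ∃ w, IsDyadic w ∧ 2 * z = d - 3 * w := by
  obtain ⟨a, l, rfl⟩ := hz
  obtain ⟨d, hd, b, h⟩ := exists_digit_int_div_two_pow (2 * a) l
  refine ⟨d, hd, b / 2 ^ l, ⟨b, l, rfl⟩, ?_⟩
  rw [← h, Int.cast_mul, Int.cast_ofNat, mul_div_assoc]

end Dyadic

section Tile

lemma phi_zero : phi 0 = 0 :=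
  Prod.ext Rat.cast_zero Rat.cast_zero

lemma phi_add (z w : ℚ) : phi (z + w) = phi z + phi w :=
  Prod.ext (Rat.cast_add z w) (Rat.cast_add z w)

lemma phi_injective : Injective phi :=
  fun _ _ h => Rat.cast_injective (congrArg Prod.fst h)

lemma phi_half_natCast_injective : Injective fun d : ℕ => phi (d / 2) := fun _ _ h =>
  Nat.cast_injective ((div_left_inj' two_ne_zero).1 (phi_injective h))

lemma smul_phi (u : ℚˣ) (z : ℚ) : u • phi z = phi (u * z) := by
  ext <;> simp [phi, Units.smul_def, Rat.smul_def]

/-- The base `-3/2`, acting on `ℝ × ℚ_[2]` through both embeddings of `ℚ`. -/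
def tileBase : ℚˣ := Units.mk0 (-3 / 2) (by norm_num)

/-- The digits `0`, `1/2`, `1`, embedded diagonally; the factor `1/2` of `Ftile` is absorbed
into them. -/
noncomputable def tileDigits : Finset (ℝ × ℚ_[2]) :=
  (Finset.range 3).map ⟨fun d : ℕ => phi (d / 2), phi_half_natCast_injective⟩

lemma phi_half_mem_tileDigits {d : ℕ} (hd : d < 3) : phi (d / 2) ∈ tileDigits :=
  Finset.mem_map_of_mem _ (Finset.mem_range.2 hd)

lemma zero_mem_tileDigits : 0 ∈ tileDigits := by
  simpa only [Nat.cast_zero, zero_div, phi_zero] using phi_half_mem_tileDigits three_pos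

lemma card_tileDigits : tileDigits.card = 3 := by
  rw [tileDigits, Finset.card_map, Finset.card_range]

lemma inv_tileBase_pow_smul_phi_half (d i : ℕ) :
    tileBase⁻¹ ^ (i + 1) • phi (d / 2) =
      phi ((1 / 2 : ℚ) * (d : ℚ) * (-3 / 2 : ℚ) ^ (-(i : ℤ) - 1)) := by
  have hexp : -(i : ℤ) - 1 = -((i + 1 : ℕ) : ℤ) := by
    push_cast
    ring
  rw [smul_phi, hexp, zpow_neg, zpow_natCast, ← inv_pow, Units.val_pow_eq_pow_val,
    Units.val_inv_eq_inv_val, tileBase, Units.val_mk0]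
  ring_nf

lemma Ftile_eq_digitTile : Ftile = digitTile tileBase (tileDigits : Set (ℝ × ℚ_[2])) := by
  ext x
  constructor
  · rintro ⟨d, hd, hx⟩
    refine ⟨fun i => phi (d i / 2), fun i => phi_half_mem_tileDigits (Nat.lt_succ_of_le (hd i)), ?_⟩
    simpa only [inv_tileBase_pow_smul_phi_half] using hx
  · rintro ⟨e, he, hx⟩
    choose d hd hde using fun i => Finset.mem_map.1 (Finset.mem_coe.1 (he i))
    refine ⟨d, fun i => Nat.le_of_lt_succ (Finset.mem_range.1 (hd i)), ?_⟩
    simpa only [← hde, Embedding.coeFn_mk, inv_tileBase_pow_smul_phi_half] using hx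

lemma distribHaarChar_tileBase : distribHaarChar (ℝ × ℚ_[2]) tileBase = 3 := by
  rw [distribHaarChar_real_prod_padic]
  ext
  simp only [tileBase, Units.val_mk0, NNReal.coe_mul, coe_nnnorm]
  push_cast
  rw [norm_div (-3 : ℚ_[2]), norm_neg, padic_norm_three, padic_norm_two, Real.norm_eq_abs]
  norm_num [abs_div]

lemma contractingWith_inv_tileBase_smul :
    ContractingWith (2 / 3) fun x : ℝ × ℚ_[2] => tileBase⁻¹ • x := by
  refine ⟨by rw [← NNReal.coe_lt_coe]; norm_num, ?_⟩
  refine (lipschitzWith_rat_smul_real_prod_padic (tileBase⁻¹ : ℚˣ)).weaken (max_le ?_ ?_)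
  · rw [← NNReal.coe_le_coe]
    norm_num [tileBase, abs_div]
  · rw [← NNReal.coe_le_coe]
    norm_num [tileBase, padic_norm_three, padic_norm_two]

lemma isCompact_Ftile : IsCompact Ftile := by
  rw [Ftile_eq_digitTile]
  exact isCompact_digitTile contractingWith_inv_tileBase_smul tileDigits.finite_toSet.isCompact

lemma tileBase_smul_Ftile : tileBase • Ftile = (tileDigits : Set (ℝ × ℚ_[2])) + Ftile := by
  rw [Ftile_eq_digitTile, smul_digitTile]

lemma phi_eq_tileBase_smul_add {z w d : ℚ} (h : 2 * z = d - 3 * w) :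
    phi z = tileBase • phi w + phi (d / 2) := by
  rw [smul_phi, ← phi_add, tileBase, Units.val_mk0]
  congr 1
  linear_combination h / 2

lemma hasFiniteExpansion_phi_of_digit {z w : ℚ} {d : ℕ} (hd : d < 3)
    (hw : HasFiniteExpansion tileBase (tileDigits : Set (ℝ × ℚ_[2])) (phi w))
    (h : 2 * z = d - 3 * w) :
    HasFiniteExpansion tileBase (tileDigits : Set (ℝ × ℚ_[2])) (phi z) :=
  phi_eq_tileBase_smul_add h ▸ hw.step (phi_half_mem_tileDigits hd)

-- The digit recursion runs `-2 ↦ 2 ↦ -1 ↦ 1 ↦ 0`, so `|z|` is not a decreasing measure.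
lemma hasFiniteExpansion_phi_intCast (z : ℤ) :
    HasFiniteExpansion tileBase (tileDigits : Set (ℝ × ℚ_[2])) (phi z) := by
  by_cases hz : z = 0
  · rw [hz, Int.cast_zero, phi_zero]
    exact .zero
  · have hdigit : 2 * z = (2 * z % 3).toNat - 3 * -(2 * z / 3) := by omega
    exact hasFiniteExpansion_phi_of_digit (d := (2 * z % 3).toNat) (by omega)
      (hasFiniteExpansion_phi_intCast (-(2 * z / 3))) (by exact_mod_cast hdigit)
termination_by (4 * z - 1).natAbs

lemma IsDyadic.hasFiniteExpansion_phi {z : ℚ} (hz : IsDyadic z) :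
    HasFiniteExpansion tileBase (tileDigits : Set (ℝ × ℚ_[2])) (phi z) := by
  obtain ⟨a, l, rfl⟩ := hz
  induction l generalizing a with
  | zero => simpa only [pow_zero, div_one] using hasFiniteExpansion_phi_intCast a
  | succ l ih =>
    obtain ⟨d, hd, b, h⟩ := exists_digit_int_div_two_pow a l
    refine hasFiniteExpansion_phi_of_digit hd (ih b) ?_
    rw [← h, pow_succ']
    field_simp

lemma image_phi_isDyadic_subset :
    phi '' {z | IsDyadic z} ⊆
      tileBase • phi '' {z | IsDyadic z} + (tileDigits : Set (ℝ × ℚ_[2])) := by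
  rintro _ ⟨z, hz, rfl⟩
  obtain ⟨d, hd, w, hw, h⟩ := hz.exists_digit
  rw [phi_eq_tileBase_smul_add h]
  exact add_mem_add (smul_mem_smul_set ⟨w, hw, rfl⟩) (phi_half_mem_tileDigits hd)

lemma locallyFinite_phi_vadd_Ftile :
    LocallyFinite fun z : {z // IsDyadic z} => phi z +ᵥ Ftile := by
  refine locallyFinite_vadd (fun R => ?_) isCompact_Ftile.isBounded
  refine ((finite_isDyadic_norm_phi_le R).preimage Subtype.val_injective.injOn).subset ?_
  exact fun z hz => ⟨z.2, hz⟩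

lemma isClosed_phi_vadd_Ftile (z : ℚ) : IsClosed (phi z +ᵥ Ftile) :=
  isCompact_Ftile.isClosed.vadd _

lemma iUnion_phi_vadd_Ftile : ⋃ z : {z // IsDyadic z}, phi z +ᵥ Ftile = univ := by
  have hunion : ⋃ z : {z // IsDyadic z}, phi z +ᵥ Ftile = phi '' {z | IsDyadic z} + Ftile := by
    rw [← vadd_eq_add, ← iUnion_vadd_set, biUnion_image, iUnion_subtype]
    rfl
  have hclosed : IsClosed (phi '' {z | IsDyadic z} + Ftile) :=
    hunion ▸ locallyFinite_phi_vadd_Ftile.isClosed_iUnion fun z => isClosed_phi_vadd_Ftile z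
  have hzero : 0 ∈ Ftile := Ftile_eq_digitTile ▸ zero_mem_digitTile zero_mem_tileDigits
  rw [hunion]
  refine add_eq_univ_of_contractingWith contractingWith_inv_tileBase_smul tileBase_smul_Ftile
    ⟨0, hzero⟩ image_phi_isDyadic_subset hclosed (R := 1) fun x => ?_
  obtain ⟨z, hz, hxz⟩ := exists_isDyadic_norm_sub_phi_le_one x
  exact ⟨phi z, ⟨z, hz, rfl⟩, hxz⟩

lemma pairwise_aedisjoint_phi_vadd_Ftile [MeasurableSpace (ℝ × ℚ_[2])] [BorelSpace (ℝ × ℚ_[2])]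
    (μ : Measure (ℝ × ℚ_[2])) [μ.IsAddHaarMeasure] :
    Pairwise (AEDisjoint μ on fun z : {z // IsDyadic z} => phi z +ᵥ Ftile) := by
  have hcard : (tileDigits.card : ℝ≥0) ≤ distribHaarChar (ℝ × ℚ_[2]) tileBase := by
    rw [card_tileDigits, distribHaarChar_tileBase, Nat.cast_ofNat]
  have hdigit := pairwise_aedisjoint_digit_vadd (μ := μ) tileBase_smul_Ftile
    isCompact_Ftile.measurableSet isCompact_Ftile.measure_ne_top hcard
  exact fun z w hzw => z.2.hasFiniteExpansion_phi.aedisjoint_vadd tileBase_smul_Ftile hdigit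
    zero_mem_tileDigits w.2.hasFiniteExpansion_phi (phi_injective.ne (Subtype.val_injective.ne hzw))

lemma image_add_phi_Ftile (z : ℚ) : (fun y => y + phi z) '' Ftile = phi z +ᵥ Ftile :=
  image_congr fun y _ => add_comm y (phi z)

theorem Ftile_tiling_general [MeasurableSpace (ℝ × ℚ_[2])] [BorelSpace (ℝ × ℚ_[2])]
    (μ : Measure (ℝ × ℚ_[2])) [μ.IsAddHaarMeasure] :
    (∀ x : ℝ × ℚ_[2], ∃ z : ℚ, IsDyadic z ∧ x ∈ (fun y => y + phi z) '' Ftile) ∧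
    (∀ z z' : ℚ, IsDyadic z → IsDyadic z' → z ≠ z' →
      μ ((fun y => y + phi z) '' Ftile ∩ (fun y => y + phi z') '' Ftile) = 0) ∧
    μ (frontier Ftile) = 0 ∧
    (∀ᵐ x ∂μ, ∃! z : ℚ, IsDyadic z ∧ x ∈ (fun y => y + phi z) '' Ftile) := by
  simp only [image_add_phi_Ftile]
  have hcover := iUnion_phi_vadd_Ftile
  have hdisj := pairwise_aedisjoint_phi_vadd_Ftile μ
  have hzero : IsDyadic 0 := ⟨0, 0, by simp⟩
  refine ⟨fun x => ?_, fun z z' hz hz' hne => ?_, ?_, ?_⟩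
  · obtain ⟨z, hxz⟩ := mem_iUnion.1 (hcover ▸ mem_univ x)
    exact ⟨z, z.2, hxz⟩
  · exact hdisj (i := ⟨z, hz⟩) (j := ⟨z', hz'⟩) (Subtype.coe_ne_coe.1 hne)
  · have hfrontier := measure_frontier_eq_zero_of_pairwise_aedisjoint
      (fun z : {z // IsDyadic z} => isClosed_phi_vadd_Ftile z) locallyFinite_phi_vadd_Ftile hcover
      hdisj ⟨0, hzero⟩
    simpa only [phi_zero, zero_vadd] using hfrontier
  · filter_upwards [ae_existsUnique_mem_of_pairwise_aedisjoint hdisj hcover] with x hx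
    obtain ⟨z, hxz, hunique⟩ := hx
    exact ⟨z, ⟨z.2, hxz⟩, fun w hw => congrArg Subtype.val (hunique ⟨w, hw.1⟩ hw.2)⟩

end Tile

end Development

/-- The collection `{F + φ(z) : z ∈ ℤ[1/2]}` is a tiling of `K`:
it covers `K`; for any two distinct `z, z' ∈ ℤ[1/2]` the overlap
`(F + φ(z)) ∩ (F + φ(z'))` has `μ`-measure zero; moreover `μ(∂F) = 0`; so `μ`-almost
every point of `K` lies in exactly one tile. Here `μ = μ_∞ × μ₂` is the product of
Lebesgue measure on `ℝ` with the Haar measure `μ₂` on `ℚ₂` normalized by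
`μ₂(ℤ₂) = 1`. -/
theorem Ftile_tiling
    [MeasurableSpace ℚ_[2]] [BorelSpace ℚ_[2]]
    (μ₂ : Measure ℚ_[2]) [μ₂.IsAddHaarMeasure]
    (hμ₂ : μ₂ {x : ℚ_[2] | ‖x‖ ≤ 1} = 1) :
    (∀ x : ℝ × ℚ_[2], ∃ z : ℚ, IsDyadic z ∧ x ∈ (fun y => y + phi z) '' Ftile) ∧
    (∀ z z' : ℚ, IsDyadic z → IsDyadic z' → z ≠ z' →
      (volume.prod μ₂)
        ((fun y => y + phi z) '' Ftile ∩ (fun y => y + phi z') '' Ftile) = 0) ∧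
    (volume.prod μ₂) (frontier Ftile) = 0 ∧
    (∀ᵐ x ∂(volume.prod μ₂),
      ∃! z : ℚ, IsDyadic z ∧ x ∈ (fun y => y + phi z) '' Ftile) :=
  Ftile_tiling_general (volume.prod μ₂)
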